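/- Correctness of the DC encoding T_ham(G) of Hamiltonicity: let V be a finite nonempty type, E ⊆ V × V a set of edges, s ∈ V a fixed starting vertex, and F ⊆ E. Then F is the edge set of a Hamiltonian cycle of the directed graph (V, E) — i.e., with n = |V| there is a bijection v : Fin n → V such that F = {(v i, v (i + 1 mod n)) | i ∈ Fin n} — if and only if (a) every vertex of V has exactly one outgoing edge in F and exactly one incoming edge in F, and (b) every vertex t ∈ V is F-reachable from s by a nonempty path (Relation.TransGen (fun a b => (a, b) ∈ F) s t). Consequently, Hamiltonian cycles of G correspond exactly to the answer sets of the DC theory T_ham(G) = (T_C, T_H, T_PC). -/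

import Mathlib

/-- Correctness of the DC encoding `T_ham(G)` of Hamiltonicity: a subset `F` of the
edges of a finite directed graph `(V, E)` is the edge set of a Hamiltonian cycle if
and only if every vertex has exactly one outgoing and exactly one incoming edge in
`F` (the constraints `T_C`) and every vertex is `F`-reachable from the starting
vertex `s` by a nonempty path (the post-constraints `T_PC` on the closure under the
Horn rules `T_H`). -/
theorem dc_ham_encoding_correct
    (V : Type*) [Fintype V] [Nonempty V] (E : Set (V × V)) (s : V)
    (F : Set (V × V)) (hFE : F ⊆ E) :
    (∃ v : Fin (Fintype.card V) → V, Function.Bijective v ∧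
      F = {p : V × V | ∃ i : Fin (Fintype.card V),
        p = (v i, v ⟨(i.1 + 1) % Fintype.card V, Nat.mod_lt _ Fintype.card_pos⟩)}) ↔
    (((∀ x : V, ∃! u : V, (x, u) ∈ F) ∧ (∀ x : V, ∃! w : V, (w, x) ∈ F)) ∧
     (∀ t : V, Relation.TransGen (fun a b => (a, b) ∈ F) s t)) := by
  constructor
  · rintro ⟨v, hv, hF⟩
    have hn : 0 < Fintype.card V := Fintype.card_pos
    have hG : F = {p : V × V | ∃ i : Fin (Fintype.card V),
        p = (v i, v ⟨(i.1 + 1) % Fintype.card V, Nat.mod_lt _ hn⟩)} := hF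
    clear hF
    generalize Fintype.card V = n at v hv hn hG
    let g : ℕ → V := fun k => v ⟨k % n, Nat.mod_lt _ hn⟩
    have hgi : ∀ i : Fin n, g i.1 = v i := by
      intro i
      simp only [g, Nat.mod_eq_of_lt i.2]
    have hgeq : ∀ a b : ℕ, g a = g b ↔ a ≡ b [MOD n] := by
      intro a b
      simp only [g, hv.1.eq_iff, Fin.mk.injEq, Nat.ModEq]
    have hsurj : ∀ x, ∃ k, k < n ∧ g k = x := by
      intro x
      obtain ⟨i, rfl⟩ := hv.2 x
      exact ⟨i.1, i.2, hgi i⟩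
    have hmem : ∀ x y, (x, y) ∈ F ↔ ∃ k, x = g k ∧ y = g (k + 1) := by
      intro x y
      rw [hG]
      simp only [Set.mem_ofPred_eq, Prod.mk.injEq]
      constructor
      · rintro ⟨i, rfl, rfl⟩
        exact ⟨i.1, (hgi i).symm, rfl⟩
      · rintro ⟨k, rfl, rfl⟩
        refine ⟨⟨k % n, Nat.mod_lt _ hn⟩, rfl, ?_⟩
        simp [g]
    refine ⟨⟨?_, ?_⟩, ?_⟩
    · intro x
      obtain ⟨k, -, rfl⟩ := hsurj x
      refine ⟨g (k + 1), (hmem _ _).2 ⟨k, rfl, rfl⟩, ?_⟩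
      intro y hy
      obtain ⟨l, h1, rfl⟩ := (hmem _ _).1 hy
      rw [hgeq] at h1 ⊢
      exact (h1.add_right 1).symm
    · intro x
      obtain ⟨k, -, rfl⟩ := hsurj x
      have hk : g k = g (k + (n - 1) + 1) := by
        rw [hgeq, show k + (n - 1) + 1 = k + n by omega]
        simp [Nat.ModEq]
      refine ⟨g (k + (n - 1)), (hmem _ _).2 ⟨_, rfl, hk⟩, ?_⟩
      intro y hy
      obtain ⟨l, rfl, h1⟩ := (hmem _ _).1 hy
      rw [hk, hgeq] at h1
      rw [hgeq]
      exact (Nat.ModEq.add_right_cancel' 1 h1).symm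
    · intro t
      obtain ⟨a, ha, rfl⟩ := hsurj s
      obtain ⟨b, hb, rfl⟩ := hsurj t
      have key : ∀ k, Relation.TransGen (fun a b => (a, b) ∈ F) (g a) (g (a + k + 1)) := by
        intro k
        induction k with
        | zero => exact Relation.TransGen.single ((hmem _ _).2 ⟨a, rfl, rfl⟩)
        | succ k ih => exact ih.tail ((hmem _ _).2 ⟨a + k + 1, rfl, rfl⟩)
      have h := key (n - a - 1 + b)
      have e : g (a + (n - a - 1 + b) + 1) = g b := by
        rw [hgeq, show a + (n - a - 1 + b) + 1 = b + n by omega]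
        simp [Nat.ModEq]
      rwa [e] at h
  · rintro ⟨⟨hout, -⟩, hreach⟩
    choose f hf hfu using hout
    have hmem : ∀ x y, (x, y) ∈ F ↔ y = f x :=
      fun x y => ⟨fun h => hfu x y h, fun h => h ▸ hf x⟩
    have hit : ∀ t, ∃ k, 0 < k ∧ f^[k] s = t := by
      intro t
      induction hreach t with
      | single h => exact ⟨1, one_pos, ((hmem _ _).1 h).symm⟩
      | tail _ h ih =>
        obtain ⟨k, hk, rfl⟩ := ih
        exact ⟨k + 1, k.succ_pos, by
          rw [Function.iterate_succ_apply']; exact ((hmem _ _).1 h).symm⟩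
    obtain ⟨k, hk, hks⟩ := hit s
    have hp : 0 < Function.minimalPeriod f s :=
      Function.minimalPeriod_pos_of_mem_periodicPts ⟨k, hk, hks⟩
    have hbij : Function.Bijective
        (fun i : Fin (Function.minimalPeriod f s) => f^[i.1] s) := by
      constructor
      · intro i j hij
        exact Fin.ext (Function.iterate_injOn_Iio_minimalPeriod i.2 j.2 hij)
      · intro t
        obtain ⟨m, -, rfl⟩ := hit t
        exact ⟨⟨m % _, Nat.mod_lt _ hp⟩, Function.iterate_mod_minimalPeriod_eq⟩
    have hcard : Function.minimalPeriod f s = Fintype.card V := by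
      simpa using Fintype.card_of_bijective hbij
    have hmod : ∀ m, f^[m % Fintype.card V] s = f^[m] s := by
      intro m
      rw [← hcard]
      exact Function.iterate_mod_minimalPeriod_eq
    rw [hcard] at hbij
    refine ⟨_, hbij, ?_⟩
    ext ⟨x, y⟩
    simp only [hmem, Set.mem_ofPred_eq, Prod.mk.injEq, hmod, Function.iterate_succ_apply']
    constructor
    · rintro rfl
      obtain ⟨i, hi⟩ := hbij.2 x
      exact ⟨i, hi.symm, by rw [← hi]⟩
    · rintro ⟨i, rfl, rfl⟩
      rfl
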